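/- arXiv:0912.5079 — 3 statements merged into one kernel-verified Lean document; each statement's English description precedes it below -/
import Mathlib

section
/- Under any uniformly avoiding source μ, for every index i ≥ k and every fixed k-tuple α ∈ (Fin σ)^k, the probability that the k-window at position i equals α satisfies μ(W_i = α) ≤ 1/(σ-k)^k. -/
open MeasureTheory ProbabilityTheory
open scoped Classical ENNReal

noncomputable section

/-- The `k`-window at position `i` of an infinite string `ω : ℕ → Fin σ`. -/
def Window {σ : ℕ} (k i : ℕ) (ω : ℕ → Fin σ) : Fin k → Fin σ :=
  fun t => ω (i + t)

/-- A *uniformly avoiding source*: a probability measure `μ` on `ℕ → Fin σ`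
(with the product σ-algebra) such that (i) almost surely the first `k`
coordinates are pairwise distinct, and (ii) conditioned on any positive-probability
history of length `n ≥ k` whose last `k` entries are pairwise distinct, the next
character is uniform on the `σ - k` characters not among the last `k` entries. -/
def UniformlyAvoiding {σ : ℕ} (k : ℕ) (μ : Measure (ℕ → Fin σ)) : Prop :=
  IsProbabilityMeasure μ ∧
  (∀ᵐ ω ∂μ, ∀ i j : ℕ, i < k → j < k → i ≠ j → ω i ≠ ω j) ∧
  ∀ n : ℕ, k ≤ n → ∀ a : ℕ → Fin σ,
    μ {ω | ∀ t < n, ω t = a t} ≠ 0 →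
    (∀ p q : ℕ, n - k ≤ p → p < n → n - k ≤ q → q < n → p ≠ q → a p ≠ a q) →
    ∀ b : Fin σ,
      (μ[|{ω | ∀ t < n, ω t = a t}]) {ω | ω n = b} =
        if ∃ t : ℕ, n - k ≤ t ∧ t < n ∧ a t = b then 0
        else 1 / ((σ - k : ℕ) : ℝ≥0∞)

/-!
Conditionally on the prefix of length `i`, the window at position `i` is read off one character at
a time, and each character costs a factor `1 / (σ - k)`: a prefix of positive probability
automatically ends in `k` distinct characters, so the rule for the next character applies to it.
Averaging over the prefix of length `i` gives the bound, for windows of any length.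
-/

theorem measure_le_mul_measure_univ_of_forall_inter_fiber_le {Ω β : Type*} [MeasurableSpace Ω]
    [Countable β] {μ : Measure Ω} {f : Ω → β} (hf : ∀ x, MeasurableSet (f ⁻¹' {f x}))
    {s : Set Ω} {c : ℝ≥0∞}
    (h : ∀ x, μ (s ∩ f ⁻¹' {f x}) ≤ c * μ (f ⁻¹' {f x})) : μ s ≤ c * μ Set.univ := by
  have s_subset : s ⊆ ⋃ y : Set.range f, s ∩ f ⁻¹' {y.1} := fun x hx =>
    Set.mem_iUnion.2 ⟨⟨f x, x, rfl⟩, hx, rfl⟩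
  calc μ s ≤ ∑' y : Set.range f, μ (s ∩ f ⁻¹' {y.1}) :=
        (measure_mono s_subset).trans (measure_iUnion_le _)
    _ ≤ ∑' y : Set.range f, c * μ (f ⁻¹' {y.1}) :=
        ENNReal.tsum_le_tsum (Set.forall_subtype_range_iff.2 h)
    _ = c * μ Set.univ := by
        rw [ENNReal.tsum_mul_left, tsum_measure_preimage_singleton (Set.to_countable _)
          (Set.forall_mem_range.2 hf), Set.preimage_range]

theorem measurableSet_cylinder {A : ℕ → Type*} [∀ n, MeasurableSpace (A n)]
    [∀ n, MeasurableSingletonClass (A n)] (a : ∀ n, A n) (n : ℕ) :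
    MeasurableSet (PiNat.cylinder a n) := by
  rw [PiNat.cylinder_eq_pi]
  exact .pi (Set.to_countable _) fun t _ => measurableSet_singleton (a t)

theorem cylinder_succ {A : ℕ → Type*} (a : ∀ n, A n) (n : ℕ) :
    PiNat.cylinder a (n + 1) = PiNat.cylinder a n ∩ {ω | ω n = a n} :=
  Set.ext fun _ => Nat.forall_lt_succ_right

theorem measure_le_mul_measure_univ_of_forall_inter_cylinder_le {A : Type*} [Countable A]
    [MeasurableSpace A] [MeasurableSingletonClass A] {μ : Measure (ℕ → A)} {s : Set (ℕ → A)}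
    {c : ℝ≥0∞} (n : ℕ)
    (h : ∀ a, μ (s ∩ PiNat.cylinder a n) ≤ c * μ (PiNat.cylinder a n)) : μ s ≤ c * μ Set.univ := by
  have fiber_eq (a : ℕ → A) : (PiNat.res · n) ⁻¹' {PiNat.res a n} = PiNat.cylinder a n :=
    (PiNat.cylinder_eq_res a n).symm
  apply measure_le_mul_measure_univ_of_forall_inter_fiber_le (f := (PiNat.res · n))
  · intro a
    rw [fiber_eq]
    exact measurableSet_cylinder a n
  · intro a
    rw [fiber_eq]
    exact h a

theorem setOf_window_eq_inter_cylinder_subset {σ m i : ℕ} {α : Fin m → Fin σ} {a ω₀ : ℕ → Fin σ}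
    (hω₀ : ω₀ ∈ {ω | Window m i ω = α} ∩ PiNat.cylinder a i) :
    {ω | Window m i ω = α} ∩ PiNat.cylinder a i ⊆ PiNat.cylinder ω₀ (i + m) := by
  rintro ω ⟨hω, hωa⟩ t ht
  obtain hti | hit := lt_or_ge t i
  · rw [hωa t hti, hω₀.2 t hti]
  · obtain ⟨j, rfl⟩ := Nat.exists_eq_add_of_le hit
    exact congrFun (hω.trans hω₀.1.symm) ⟨j, by omega⟩

namespace UniformlyAvoiding

variable {σ k n : ℕ} {μ : Measure (ℕ → Fin σ)} {a : ℕ → Fin σ}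

theorem measure_cylinder_succ (hμ : UniformlyAvoiding k μ) (hn : k ≤ n)
    (ha : μ (PiNat.cylinder a n) ≠ 0) (hinj : Set.InjOn a (Set.Ico (n - k) n)) :
    μ (PiNat.cylinder a (n + 1)) =
      (if a n ∈ a '' Set.Ico (n - k) n then 0 else ((σ - k : ℕ) : ℝ≥0∞)⁻¹) *
        μ (PiNat.cylinder a n) := by
  have := hμ.1
  have next_char : μ[{ω | ω n = a n} | PiNat.cylinder a n] =
      if ∃ t, n - k ≤ t ∧ t < n ∧ a t = a n then 0 else 1 / ((σ - k : ℕ) : ℝ≥0∞) :=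
    hμ.2.2 n hn a ha (fun p q hp hpn hq hqn hpq => hinj.ne ⟨hp, hpn⟩ ⟨hq, hqn⟩ hpq) (a n)
  rw [cylinder_succ, ← cond_mul_eq_inter (measurableSet_cylinder a n), next_char]
  simp only [Set.mem_image, Set.mem_Ico, and_assoc, one_div]

theorem injOn_Ico_of_measure_cylinder_ne_zero (hμ : UniformlyAvoiding k μ) (hn : k ≤ n)
    (ha : μ (PiNat.cylinder a n) ≠ 0) : Set.InjOn a (Set.Ico (n - k) n) := by
  induction n, hn using Nat.le_induction with
  | base =>
    obtain ⟨ω, hωa, hω⟩ := Filter.Frequently.exists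
      ((frequently_ae_mem_iff.2 ha).and_eventually hμ.2.1)
    intro p hp q hq hpq
    by_contra hne
    exact hω p q hp.2 hq.2 hne (by rw [hωa p hp.2, hωa q hq.2, hpq])
  | succ n hn ih =>
    have ha' : μ (PiNat.cylinder a n) ≠ 0 := fun h =>
      ha (measure_mono_null (PiNat.cylinder_anti a n.le_succ) h)
    have fresh : a n ∉ a '' Set.Ico (n - k) n := fun hmem =>
      ha (by rw [hμ.measure_cylinder_succ hn ha' (ih ha'), if_pos hmem, zero_mul])
    have inj_extended : Set.InjOn a (Set.Ico (n - k) (n + 1)) := by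
      rw [← Set.insert_Ico_right_eq_Ico_add_one (n.sub_le k)]
      exact (Set.injOn_insert Set.right_notMem_Ico).2 ⟨ih ha', fresh⟩
    exact inj_extended.mono (Set.Ico_subset_Ico_left (by omega))

theorem measure_cylinder_succ_le (hμ : UniformlyAvoiding k μ) (hn : k ≤ n) :
    μ (PiNat.cylinder a (n + 1)) ≤ ((σ - k : ℕ) : ℝ≥0∞)⁻¹ * μ (PiNat.cylinder a n) := by
  by_cases ha : μ (PiNat.cylinder a n) = 0
  · rw [measure_mono_null (PiNat.cylinder_anti a n.le_succ) ha]
    exact zero_le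
  · rw [hμ.measure_cylinder_succ hn ha (hμ.injOn_Ico_of_measure_cylinder_ne_zero hn ha)]
    gcongr
    split_ifs
    exacts [zero_le, le_rfl]

theorem measure_cylinder_add_le (hμ : UniformlyAvoiding k μ) (hn : k ≤ n) (m : ℕ) :
    μ (PiNat.cylinder a (n + m)) ≤ ((σ - k : ℕ) : ℝ≥0∞)⁻¹ ^ m * μ (PiNat.cylinder a n) := by
  induction m with
  | zero => simp
  | succ m ih =>
    calc μ (PiNat.cylinder a (n + m + 1))
        ≤ ((σ - k : ℕ) : ℝ≥0∞)⁻¹ * μ (PiNat.cylinder a (n + m)) :=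
          hμ.measure_cylinder_succ_le (hn.trans (n.le_add_right m))
      _ ≤ ((σ - k : ℕ) : ℝ≥0∞)⁻¹ * (((σ - k : ℕ) : ℝ≥0∞)⁻¹ ^ m * μ (PiNat.cylinder a n)) := by
          gcongr
      _ = ((σ - k : ℕ) : ℝ≥0∞)⁻¹ ^ (m + 1) * μ (PiNat.cylinder a n) := by rw [pow_succ', mul_assoc]

theorem measure_window_eq_inter_cylinder_le (hμ : UniformlyAvoiding k μ) {i m : ℕ} (hi : k ≤ i)
    (α : Fin m → Fin σ) :
    μ ({ω | Window m i ω = α} ∩ PiNat.cylinder a i) ≤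
      ((σ - k : ℕ) : ℝ≥0∞)⁻¹ ^ m * μ (PiNat.cylinder a i) := by
  obtain hempty | ⟨ω₀, hω₀⟩ := ({ω | Window m i ω = α} ∩ PiNat.cylinder a i).eq_empty_or_nonempty
  · simp [hempty]
  · calc μ ({ω | Window m i ω = α} ∩ PiNat.cylinder a i)
        ≤ μ (PiNat.cylinder ω₀ (i + m)) := measure_mono (setOf_window_eq_inter_cylinder_subset hω₀)
      _ ≤ ((σ - k : ℕ) : ℝ≥0∞)⁻¹ ^ m * μ (PiNat.cylinder ω₀ i) := hμ.measure_cylinder_add_le hi m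
      _ = ((σ - k : ℕ) : ℝ≥0∞)⁻¹ ^ m * μ (PiNat.cylinder a i) := by
          rw [PiNat.mem_cylinder_iff_eq.1 hω₀.2]

end UniformlyAvoiding

theorem window_prob_le_general {σ k m i : ℕ} {μ : Measure (ℕ → Fin σ)}
    (hμ : UniformlyAvoiding k μ) (hi : k ≤ i) (α : Fin m → Fin σ) :
    μ {ω | Window m i ω = α} ≤ 1 / ((σ - k : ℕ) : ℝ≥0∞) ^ m := by
  have := hμ.1
  calc μ {ω | Window m i ω = α}
      ≤ ((σ - k : ℕ) : ℝ≥0∞)⁻¹ ^ m * μ Set.univ :=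
        measure_le_mul_measure_univ_of_forall_inter_cylinder_le i fun _ =>
          hμ.measure_window_eq_inter_cylinder_le hi α
    _ = 1 / ((σ - k : ℕ) : ℝ≥0∞) ^ m := by
        rw [measure_univ, mul_one, ← ENNReal.inv_pow, one_div]

/-- Under any uniformly avoiding source `μ`, for every `i ≥ k` and every fixed
`k`-tuple `α`, the probability that the `k`-window at position `i` equals `α`
is at most `1/(σ-k)^k`. -/
theorem window_prob_le {σ k : ℕ} (hk : 1 ≤ k) (hσ : k < σ)
    (μ : Measure (ℕ → Fin σ)) (hμ : UniformlyAvoiding k μ)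
    (i : ℕ) (hi : k ≤ i) (α : Fin k → Fin σ) :
    μ {ω | Window k i ω = α} ≤ 1 / ((σ - k : ℕ) : ℝ≥0∞) ^ k :=
  window_prob_le_general hμ hi α
end
end

section
/- Main lemma (probabilistic part): fix an integer k ≥ 1 and a real ε with 0 < ε < k/2. For every δ > 0 there exists σ_0 such that for all σ ≥ σ_0 and every uniformly avoiding source μ on alphabet Fin σ, setting n = ⌊(σ-k)^{k/2-ε}⌋, the probability that some k-tuple occurs twice among the first n emitted characters — i.e., that there exist indices 0 ≤ i < j ≤ n - k with W_i = W_j — is less than δ. (In particular, with high probability as σ → ∞, the source does not emit duplicate k-tuples among its first (σ-k)^{k/2-ε} characters.) -/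
open MeasureTheory ProbabilityTheory
open scoped Classical ENNReal

noncomputable section

/-- The length `⌊(σ-k)^(k/2-ε)⌋` from the main lemma. -/
def sampleLength (k : ℕ) (ε : ℝ) (σ : ℕ) : ℕ :=
  ⌊((σ - k : ℕ) : ℝ) ^ ((k : ℝ) / 2 - ε)⌋₊

/-!
Conditioned on any history of positive probability, each character from time `k` on takes a
prescribed value with probability at most `1 / (σ - k)`. For `i < j` and `k ≤ j`, the windows at `i`
and `j` agree only if each of the `k` characters of the later one takes a value determined by its
past, which has probability at most `(σ - k)⁻ᵏ` even when the windows overlap. Since the first `k`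
characters are almost surely distinct, windows at `i < j < k` almost surely differ. A union bound
over at most `n²` pairs with `n ≤ (σ - k) ^ (k / 2 - ε)` leaves `(σ - k) ^ (-2ε)`, which tends
to `0`.
-/

open Set Filter
open scoped Topology

section Measure

variable {Ω : Type*} [MeasurableSpace Ω] {μ : Measure Ω} {c : ℝ≥0∞}

section Fiber

variable {ι : Type*} [Countable ι] [MeasurableSpace ι] [MeasurableSingletonClass ι] {X : Ω → ι}

lemma measure_eq_tsum_inter_fiber (hX : Measurable X) (A : Set Ω) :
    μ A = ∑' x, μ (X ⁻¹' {x} ∩ A) := by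
  have fiber_measurable (x : ι) : MeasurableSet (X ⁻¹' {x}) := hX (measurableSet_singleton x)
  have fibers_disjoint : Pairwise (Function.onFun Disjoint fun x ↦ X ⁻¹' {x}) :=
    pairwise_disjoint_fiber X
  calc μ A = μ.restrict A (⋃ x, X ⁻¹' {x}) := by
        rw [← preimage_iUnion, iUnion_of_singleton, preimage_univ, Measure.restrict_apply_univ]
    _ = ∑' x, μ.restrict A (X ⁻¹' {x}) := measure_iUnion fibers_disjoint fiber_measurable
    _ = ∑' x, μ (X ⁻¹' {x} ∩ A) :=
        tsum_congr fun x ↦ Measure.restrict_apply (fiber_measurable x)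

lemma measure_preimage_inter_le_of_cond_fiber_le [IsFiniteMeasure μ] (hX : Measurable X)
    {T : Set ι} {E : Set Ω}
    (hE : ∀ x ∈ T, μ (X ⁻¹' {x}) ≠ 0 → μ[|X ⁻¹' {x}] E ≤ c) :
    μ (X ⁻¹' T ∩ E) ≤ c * μ (X ⁻¹' T) := by
  have fiber_measurable (x : ι) : MeasurableSet (X ⁻¹' {x}) := hX (measurableSet_singleton x)
  rw [measure_eq_tsum_inter_fiber hX, measure_eq_tsum_inter_fiber hX (X ⁻¹' T),
    ← ENNReal.tsum_mul_left]
  refine ENNReal.tsum_le_tsum fun x ↦ ?_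
  by_cases hx : x ∈ T
  · have fiber_inter : X ⁻¹' {x} ∩ X ⁻¹' T = X ⁻¹' {x} :=
      inter_eq_left.2 (preimage_mono (singleton_subset_iff.2 hx))
    rw [← inter_assoc, fiber_inter, ← cond_mul_eq_inter (fiber_measurable x)]
    by_cases h0 : μ (X ⁻¹' {x}) = 0
    · simp [h0]
    · gcongr
      exact hE x hx h0
  · have fiber_disjoint : X ⁻¹' {x} ∩ X ⁻¹' T = ∅ := by
      rw [← preimage_inter, singleton_inter_eq_empty.2 hx, preimage_empty]
    simp [← inter_assoc, fiber_disjoint]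

end Fiber

lemma measure_exists_lt_le_mem_le {E : ℕ → ℕ → Set Ω} (hE : ∀ i j, i < j → μ (E i j) ≤ c) (m : ℕ) :
    μ {ω | ∃ i j, i < j ∧ j ≤ m ∧ ω ∈ E i j} ≤ (m : ℝ≥0∞) ^ 2 * c := by
  have event_subset : {ω | ∃ i j, i < j ∧ j ≤ m ∧ ω ∈ E i j} ⊆
      ⋃ i ∈ Finset.range m, ⋃ j ∈ Finset.Ioc i m, E i j := by
    rintro ω ⟨i, j, hij, hjm, hω⟩
    simp only [mem_iUnion]
    exact ⟨i, Finset.mem_range.2 (hij.trans_le hjm), j, Finset.mem_Ioc.2 ⟨hij, hjm⟩, hω⟩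
  calc μ {ω | ∃ i j, i < j ∧ j ≤ m ∧ ω ∈ E i j}
      ≤ ∑ i ∈ Finset.range m, ∑ j ∈ Finset.Ioc i m, μ (E i j) :=
        (measure_mono event_subset).trans <| (measure_biUnion_finset_le _ _).trans <|
          Finset.sum_le_sum fun i _ ↦ measure_biUnion_finset_le _ _
    _ ≤ ∑ i ∈ Finset.range m, ∑ _j ∈ Finset.Ioc i m, c :=
        Finset.sum_le_sum fun i _ ↦ Finset.sum_le_sum fun j hj ↦ hE i j (Finset.mem_Ioc.1 hj).1
    _ ≤ ∑ _i ∈ Finset.range m, m * c := by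
        refine Finset.sum_le_sum fun i _ ↦ ?_
        rw [Finset.sum_const, Nat.card_Ioc, nsmul_eq_mul]
        gcongr
        exact m.sub_le i
    _ = (m : ℝ≥0∞) ^ 2 * c := by
        rw [Finset.sum_const, Finset.card_range, nsmul_eq_mul, sq, mul_assoc]

end Measure

section History

variable {α : Type*} [MeasurableSpace α] {μ : Measure (ℕ → α)} {a : ℕ → α} {n : ℕ} {c : ℝ≥0∞}

lemma of_ae_of_measure_cylinder_ne_zero {p : (ℕ → α) → Prop} (hp : DependsOn p (Iio n))
    (hae : ∀ᵐ ω ∂μ, p ω) (ha : μ (PiNat.cylinder a n) ≠ 0) : p a := by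
  obtain ⟨ω, hω, hpω⟩ := ((frequently_ae_mem_iff.2 ha).and_eventually hae).exists
  exact (hp hω).mp hpω

lemma dependsOn_injOn {ι β : Type*} (s : Set ι) : DependsOn (fun ω : ι → β ↦ InjOn ω s) s :=
  fun _ _ h ↦ propext (EqOn.injOn_iff h)

variable [MeasurableSingletonClass α]

lemma measurableSet_piNat_cylinder (a : ℕ → α) (n : ℕ) : MeasurableSet (PiNat.cylinder a n) := by
  have : PiNat.cylinder a n = (Iio n).pi fun t ↦ {a t} := rfl
  rw [this]
  exact .pi (to_countable _) fun t _ ↦ measurableSet_singleton (a t)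

variable [Countable α]

lemma measure_inter_le_of_cond_cylinder_le [IsFiniteMeasure μ] {S E : Set (ℕ → α)}
    (hS : DependsOn (· ∈ S) (Iio n))
    (hE : ∀ a ∈ S, μ (PiNat.cylinder a n) ≠ 0 → μ[|PiNat.cylinder a n] E ≤ c) :
    μ (S ∩ E) ≤ c * μ S := by
  let history : (ℕ → α) → Iio n → α := fun ω t ↦ ω t
  have history_measurable : Measurable history := by fun_prop
  have preimage_history (a : ℕ → α) : history ⁻¹' {history a} = PiNat.cylinder a n := by
    ext ω
    simp [history, funext_iff, PiNat.cylinder]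
  have preimage_image_history : history ⁻¹' (history '' S) = S := by
    refine subset_antisymm ?_ (subset_preimage_image _ _)
    rintro ω ⟨a, ha, haω⟩
    exact (hS fun t ht ↦ congrFun haω ⟨t, ht⟩).mp ha
  rw [← preimage_image_history]
  refine measure_preimage_inter_le_of_cond_fiber_le history_measurable ?_
  rintro _ ⟨a, ha, rfl⟩
  rw [preimage_history]
  exact hE a ha

lemma measure_inter_apply_eq_le_of_cond_cylinder_le [IsFiniteMeasure μ] {S : Set (ℕ → α)}
    {f : (ℕ → α) → α} (hS : DependsOn (· ∈ S) (Iio n)) (hf : DependsOn f (Iio n))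
    (hc : ∀ a ∈ S, μ (PiNat.cylinder a n) ≠ 0 → μ[|PiNat.cylinder a n] {ω | ω n = f a} ≤ c) :
    μ (S ∩ {ω | ω n = f ω}) ≤ c * μ S := by
  refine measure_inter_le_of_cond_cylinder_le hS fun a ha h0 ↦ (le_of_eq ?_).trans (hc a ha h0)
  have inter_eq : PiNat.cylinder a n ∩ {ω | ω n = f ω} = PiNat.cylinder a n ∩ {ω | ω n = f a} := by
    ext ω
    exact and_congr_right fun hω ↦ by simp only [mem_ofPred_eq, hf hω]
  rw [← cond_inter_self (measurableSet_piNat_cylinder a n), inter_eq,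
    cond_inter_self (measurableSet_piNat_cylinder a n)]

lemma measure_forall_lt_apply_add_eq_le [IsProbabilityMeasure μ] {i j : ℕ} (hij : i < j)
    (hc : ∀ n, j ≤ n → ∀ a : ℕ → α, μ (PiNat.cylinder a n) ≠ 0 →
      ∀ b, μ[|PiNat.cylinder a n] {ω | ω n = b} ≤ c) (t : ℕ) :
    μ {ω | ∀ s < t, ω (j + s) = ω (i + s)} ≤ c ^ t := by
  induction t with
  | zero => simp
  | succ t ih =>
    let agree : Set (ℕ → α) := {ω | ∀ s < t, ω (j + s) = ω (i + s)}
    have dependsOn_agree : DependsOn (· ∈ agree) (Iio (j + t)) := fun ω ω' h ↦ by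
      refine propext (forall₂_congr fun s hs ↦ ?_)
      rw [h (j + s) (by simpa using hs), h (i + s) (by simp only [mem_Iio]; omega)]
    have dependsOn_target : DependsOn (fun ω : ℕ → α ↦ ω (i + t)) (Iio (j + t)) :=
      fun ω ω' h ↦ h (i + t) (by simpa using hij)
    calc μ {ω | ∀ s < t + 1, ω (j + s) = ω (i + s)}
        = μ (agree ∩ {ω | ω (j + t) = ω (i + t)}) := by
          simp only [Nat.forall_lt_succ_right, agree, ofPred_and]
      _ ≤ c * μ agree :=
          measure_inter_apply_eq_le_of_cond_cylinder_le dependsOn_agree dependsOn_target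
            fun a _ h0 ↦ hc (j + t) (by omega) a h0 _
      _ ≤ c ^ (t + 1) := by
          rw [pow_succ']
          gcongr

end History

namespace UniformlyAvoiding

variable {σ k : ℕ} {μ : Measure (ℕ → Fin σ)}

lemma cond_cylinder_apply_eq (hμ : UniformlyAvoiding k μ) {n : ℕ} (hn : k ≤ n) {a : ℕ → Fin σ}
    (ha : μ (PiNat.cylinder a n) ≠ 0) (ha_inj : InjOn a (Ico (n - k) n)) (b : Fin σ) :
    μ[|PiNat.cylinder a n] {ω | ω n = b} =
      if b ∈ a '' Ico (n - k) n then 0 else 1 / ((σ - k : ℕ) : ℝ≥0∞) := by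
  have last_distinct : ∀ p q : ℕ, n - k ≤ p → p < n → n - k ≤ q → q < n → p ≠ q → a p ≠ a q :=
    fun p q hp hp' hq hq' ↦ ha_inj.ne ⟨hp, hp'⟩ ⟨hq, hq'⟩
  simp only [mem_image, mem_Ico, and_assoc]
  exact hμ.2.2 n hn a ha last_distinct b

lemma ae_injOn_Ico (hμ : UniformlyAvoiding k μ) {n : ℕ} (hn : k ≤ n) :
    ∀ᵐ ω ∂μ, InjOn ω (Ico (n - k) n) := by
  have := hμ.1
  induction n, hn using Nat.le_induction with
  | base =>
    filter_upwards [hμ.2.1] with ω hω p hp q hq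
    exact not_imp_not.1 (hω p q hp.2 hq.2)
  | succ n hn ih =>
    have next_ne (t : ℕ) (ht : t ∈ Ico (n - k) n) : ∀ᵐ ω ∂μ, ω n ≠ ω t := by
      have repeat_le : μ (univ ∩ {ω | ω n = ω t}) ≤ 0 * μ univ := by
        refine measure_inter_apply_eq_le_of_cond_cylinder_le (f := fun ω ↦ ω t)
          (fun _ _ _ ↦ rfl) (fun _ _ h ↦ h t ht.2) fun a _ h0 ↦ ?_
        have a_inj := of_ae_of_measure_cylinder_ne_zero
          ((dependsOn_injOn _).mono Ico_subset_Iio_self) ih h0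
        rw [hμ.cond_cylinder_apply_eq hn h0 a_inj, if_pos (mem_image_of_mem a ht)]
      simpa [ae_iff] using repeat_le
    filter_upwards [ih, (ae_ball_iff (to_countable _)).2 next_ne] with ω hω hne
    have inj_insert : InjOn ω (insert n (Ico (n - k) n)) := by
      refine (injOn_insert (by simp)).2 ⟨hω, ?_⟩
      rintro ⟨t, ht, htn⟩
      exact hne t ht htn.symm
    exact inj_insert.mono fun t ht ↦ by simp only [mem_Ico, mem_insert_iff] at ht ⊢; omega

lemma cond_cylinder_apply_le (hμ : UniformlyAvoiding k μ) {n : ℕ} (hn : k ≤ n) {a : ℕ → Fin σ}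
    (ha : μ (PiNat.cylinder a n) ≠ 0) (b : Fin σ) :
    μ[|PiNat.cylinder a n] {ω | ω n = b} ≤ 1 / ((σ - k : ℕ) : ℝ≥0∞) := by
  have a_inj := of_ae_of_measure_cylinder_ne_zero
    ((dependsOn_injOn _).mono Ico_subset_Iio_self) (hμ.ae_injOn_Ico hn) ha
  rw [hμ.cond_cylinder_apply_eq hn ha a_inj]
  split_ifs
  exacts [zero_le, le_rfl]

lemma measure_window_eq_le (hμ : UniformlyAvoiding k μ) {i j : ℕ} (hij : i < j) :
    μ {ω | Window k i ω = Window k j ω} ≤ (1 / ((σ - k : ℕ) : ℝ≥0∞)) ^ k := by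
  have := hμ.1
  rcases lt_or_ge j k with hjk | hkj
  · have windows_ne : ∀ᵐ ω ∂μ, Window k i ω ≠ Window k j ω := by
      filter_upwards [hμ.2.1] with ω hω heq
      exact hω i j (hij.trans hjk) hjk hij.ne (congrFun heq ⟨0, by omega⟩)
    have event_null : μ {ω | Window k i ω = Window k j ω} = 0 := by
      simpa [ae_iff] using windows_ne
    simp [event_null]
  · calc μ {ω | Window k i ω = Window k j ω}
        ≤ μ {ω | ∀ s < k, ω (j + s) = ω (i + s)} :=
          measure_mono fun ω hω s hs ↦ (congrFun hω ⟨s, hs⟩).symm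
      _ ≤ (1 / ((σ - k : ℕ) : ℝ≥0∞)) ^ k :=
          measure_forall_lt_apply_add_eq_le hij
            (fun n hn a ha ↦ hμ.cond_cylinder_apply_le (hkj.trans hn) ha) k

lemma measure_exists_window_eq_le (hμ : UniformlyAvoiding k μ) (hkσ : k < σ) (m : ℕ) :
    μ {ω | ∃ i j : ℕ, i < j ∧ j ≤ m ∧ Window k i ω = Window k j ω} ≤
      ENNReal.ofReal ((m : ℝ) ^ 2 / ((σ - k : ℕ) : ℝ) ^ k) := by
  have pos : (0 : ℝ) < ((σ - k : ℕ) : ℝ) := Nat.cast_pos.2 (Nat.sub_pos_of_lt hkσ)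
  calc μ {ω | ∃ i j : ℕ, i < j ∧ j ≤ m ∧ Window k i ω = Window k j ω}
      ≤ (m : ℝ≥0∞) ^ 2 * (1 / ((σ - k : ℕ) : ℝ≥0∞)) ^ k :=
        measure_exists_lt_le_mem_le (fun _ _ ↦ hμ.measure_window_eq_le) m
    _ = ENNReal.ofReal ((m : ℝ) ^ 2 / ((σ - k : ℕ) : ℝ) ^ k) := by
        rw [ENNReal.ofReal_div_of_pos (by positivity), ENNReal.ofReal_pow (by positivity),
          ENNReal.ofReal_pow (by positivity), ENNReal.ofReal_natCast, ENNReal.ofReal_natCast,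
          one_div, ← ENNReal.inv_pow, ENNReal.div_eq_inv_mul, mul_comm]

end UniformlyAvoiding

lemma sampleLength_sq_div_pow_le {k σ : ℕ} (hkσ : k < σ) (ε : ℝ) :
    (sampleLength k ε σ : ℝ) ^ 2 / ((σ - k : ℕ) : ℝ) ^ k ≤ ((σ - k : ℕ) : ℝ) ^ (-(2 * ε)) := by
  set x : ℝ := ((σ - k : ℕ) : ℝ)
  have x_pos : 0 < x := Nat.cast_pos.2 (Nat.sub_pos_of_lt hkσ)
  rw [div_le_iff₀ (by positivity)]
  calc (sampleLength k ε σ : ℝ) ^ 2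
      ≤ (x ^ ((k : ℝ) / 2 - ε)) ^ 2 := by
        gcongr
        exact Nat.floor_le (by positivity)
    _ = x ^ (-(2 * ε) + k) := by
        rw [← Real.rpow_mul_natCast x_pos.le]
        congr 1
        push_cast
        ring
    _ = x ^ (-(2 * ε)) * x ^ k := Real.rpow_add_natCast x_pos.ne' _ _

lemma UniformlyAvoiding.measure_exists_window_eq_sampleLength_le {σ k : ℕ} {μ : Measure (ℕ → Fin σ)}
    (hμ : UniformlyAvoiding k μ) (hkσ : k < σ) (ε : ℝ) :
    μ {ω | ∃ i j : ℕ, i < j ∧ j ≤ sampleLength k ε σ - k ∧ Window k i ω = Window k j ω} ≤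
      ENNReal.ofReal (((σ - k : ℕ) : ℝ) ^ (-(2 * ε))) := by
  refine (hμ.measure_exists_window_eq_le hkσ _).trans (ENNReal.ofReal_le_ofReal ?_)
  refine le_trans ?_ (sampleLength_sq_div_pow_le hkσ ε)
  gcongr
  exact Nat.sub_le _ _

lemma tendsto_natCast_sub_rpow_neg_atTop (k : ℕ) {s : ℝ} (hs : 0 < s) :
    Tendsto (fun σ : ℕ ↦ ((σ - k : ℕ) : ℝ) ^ (-s)) atTop (𝓝 0) :=
  (tendsto_rpow_neg_atTop hs).comp (tendsto_natCast_atTop_atTop.comp (tendsto_sub_atTop_nat k))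

/-- Main lemma (probabilistic part): for `k ≥ 1` and `0 < ε < k/2`, for every `δ > 0`
there is `σ₀` such that for all `σ ≥ σ₀` and every uniformly avoiding source `μ` on
`Fin σ`, with `n = ⌊(σ-k)^(k/2-ε)⌋`, the probability that some `k`-tuple occurs twice
among the first `n` emitted characters is less than `δ`. -/
theorem no_duplicates_whp (k : ℕ) (hk : 1 ≤ k) (ε : ℝ) (hε0 : 0 < ε)
    (hε : ε < (k : ℝ) / 2) (δ : ℝ) (hδ : 0 < δ) :
    ∃ σ₀ : ℕ, ∀ σ : ℕ, σ₀ ≤ σ → k < σ →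
      ∀ μ : Measure (ℕ → Fin σ), UniformlyAvoiding k μ →
        μ {ω | ∃ i j : ℕ, i < j ∧ j ≤ sampleLength k ε σ - k ∧
            Window k i ω = Window k j ω} < ENNReal.ofReal δ := by
  have bound_tendsto := tendsto_natCast_sub_rpow_neg_atTop k (mul_pos two_pos hε0)
  obtain ⟨σ₀, bound_lt⟩ := eventually_atTop.1 (bound_tendsto.eventually_lt_const hδ)
  refine ⟨σ₀, fun σ hσ hkσ μ hμ ↦ ?_⟩
  calc μ {ω | ∃ i j : ℕ, i < j ∧ j ≤ sampleLength k ε σ - k ∧ Window k i ω = Window k j ω}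
      ≤ ENNReal.ofReal (((σ - k : ℕ) : ℝ) ^ (-(2 * ε))) :=
        hμ.measure_exists_window_eq_sampleLength_le hkσ ε
    _ < ENNReal.ofReal δ := (ENNReal.ofReal_lt_ofReal_iff hδ).2 (bound_lt σ hσ)
end
end

section
/- Existence of long duplicate-free strings: fix an integer k ≥ 1 and a real ε with 0 < ε < k/2. For all sufficiently large σ, there exists a string s : Fin n → Fin σ with n = ⌊(σ-k)^{k/2-ε}⌋ that contains no duplicate k-tuples, i.e., for all indices 0 ≤ i < j ≤ n - k, the substrings (s_i, …, s_{i+k-1}) and (s_j, …, s_{j+k-1}) are distinct. -/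
noncomputable section

/-- The `k`-window of a finite string `s : Fin n → Fin σ` at a position `i` with
`i + k ≤ n`. -/
def FinWindow {σ n : ℕ} (k : ℕ) (s : Fin n → Fin σ) (i : ℕ) (h : i + k ≤ n) :
    Fin k → Fin σ :=
  fun t => s ⟨i + t.val, by have := t.isLt; omega⟩

/-!
Union bound over pairs of positions `i < j`. Once the letters outside positions `j, …, j + k - 1`
are fixed, agreement of the windows at `i` and `j` determines the remaining `k` letters from left
to right, even when the windows overlap. So each pair collides in at most `σ ^ (n - k)` strings, and
some string avoids every collision as soon as the number of pairs is less than `σ ^ k`. For the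
length `n = ⌊(σ - k) ^ (k / 2 - ε)⌋` there are at most `n ^ 2 / 2 ≤ (σ - k) ^ k / 2` pairs.
-/

open Finset

section Collisions

variable {ι κ α : Type*} [Preorder ι] {f g : κ → ι}

theorem eq_of_comp_eq_comp_of_eqOn_compl_range [WellFoundedLT ι] (hfg : ∀ t, f t < g t)
    {s s' : ι → α} (hs : s ∘ f = s ∘ g) (hs' : s' ∘ f = s' ∘ g)
    (hss' : Set.EqOn s s' (Set.range g)ᶜ) : s = s' := by
  funext x
  induction x using WellFoundedLT.induction with
  | ind x ih =>
    by_cases hx : x ∈ Set.range g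
    · obtain ⟨t, rfl⟩ := hx
      calc s (g t) = s (f t) := (congrFun hs t).symm
        _ = s' (f t) := ih (f t) (hfg t)
        _ = s' (g t) := congrFun hs' t
    · exact hss' hx

theorem card_filter_comp_eq_comp_le [Fintype ι] [DecidableEq ι] [Fintype κ] [Fintype α]
    [DecidableEq α] (hg : Function.Injective g) (hfg : ∀ t, f t < g t) :
    #{s : ι → α | s ∘ f = s ∘ g} ≤
      Fintype.card α ^ (Fintype.card ι - Fintype.card κ) := by
  let free : Finset ι := (univ.image g)ᶜ
  have card_free : #free = Fintype.card ι - Fintype.card κ := by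
    rw [card_compl, card_image_of_injective _ hg, card_univ]
  have restrict_injOn :
      Set.InjOn free.restrict (({s : ι → α | s ∘ f = s ∘ g} : Finset (ι → α)) : Set (ι → α)) := by
    intro s hs s' hs' hss'
    refine eq_of_comp_eq_comp_of_eqOn_compl_range hfg ((mem_filter_univ s).mp hs)
      ((mem_filter_univ s').mp hs') fun x hx => congrFun hss' ⟨x, ?_⟩
    simpa [free] using hx
  calc #{s : ι → α | s ∘ f = s ∘ g}
      ≤ #(univ : Finset (free → α)) :=
        card_le_card_of_injOn free.restrict (fun _ _ => mem_univ _) restrict_injOn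
    _ = Fintype.card α ^ (Fintype.card ι - Fintype.card κ) := by
        rw [card_univ, Fintype.card_fun, Fintype.card_coe, card_free]

end Collisions

theorem card_sigma_fin_eq_choose_two (m : ℕ) :
    Fintype.card (Σ j : Fin m, Fin j) = m.choose 2 := by
  simp only [Fintype.card_sigma, Fintype.card_fin]
  rw [Fin.sum_univ_eq_sum_range (fun j => j), sum_range_id, Nat.choose_two_right]

section Windows

variable {σ n k : ℕ}

theorem card_filter_finWindow_eq_le {i j : ℕ} (hij : i < j) (hi : i + k ≤ n) (hj : j + k ≤ n) :
    #{s : Fin n → Fin σ | FinWindow k s i hi = FinWindow k s j hj} ≤ σ ^ (n - k) := by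
  let shift (a : ℕ) (ha : a + k ≤ n) (t : Fin k) : Fin n := ⟨a + t, by omega⟩
  have shift_injective : Function.Injective (shift j hj) := fun t u htu =>
    Fin.ext (Nat.add_left_cancel (Fin.mk.inj htu))
  have shift_lt (t : Fin k) : shift i hi t < shift j hj t := Nat.add_lt_add_right hij t
  have card_le := card_filter_comp_eq_comp_le (α := Fin σ) shift_injective shift_lt
  rwa [Fintype.card_fin, Fintype.card_fin, Fintype.card_fin] at card_le

/-- A string is duplicate-free (for `k`) if its `k`-windows at distinct positions are distinct.
Strings shorter than `k` have no windows and satisfy this vacuously. -/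
def DuplicateFree (k : ℕ) (s : Fin n → Fin σ) : Prop :=
  ∀ i j : ℕ, i < j → ∀ (hi : i + k ≤ n) (hj : j + k ≤ n),
    FinWindow k s i hi ≠ FinWindow k s j hj

open Classical in
theorem card_filter_not_duplicateFree_le :
    #{s : Fin n → Fin σ | ¬ DuplicateFree k s} ≤ (n + 1 - k).choose 2 * σ ^ (n - k) := by
  let collisions (p : Σ j : Fin (n + 1 - k), Fin j) : Finset (Fin n → Fin σ) :=
    {s | FinWindow k s p.2 (by omega) = FinWindow k s p.1 (by omega)}
  have subset_collisions :
      ({s | ¬ DuplicateFree k s} : Finset (Fin n → Fin σ)) ⊆ univ.biUnion collisions := by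
    intro s hs
    rw [mem_filter_univ, DuplicateFree] at hs
    push Not at hs
    obtain ⟨i, j, hij, hi, hj, heq⟩ := hs
    exact mem_biUnion.mpr ⟨⟨⟨j, by omega⟩, ⟨i, hij⟩⟩, mem_univ _, (mem_filter_univ s).mpr heq⟩
  calc #{s : Fin n → Fin σ | ¬ DuplicateFree k s}
      ≤ #(univ.biUnion collisions) := card_le_card subset_collisions
    _ ≤ #(univ : Finset (Σ j : Fin (n + 1 - k), Fin j)) * σ ^ (n - k) :=
        card_biUnion_le_card_mul _ _ _ fun p _ => card_filter_finWindow_eq_le p.2.isLt _ _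
    _ = (n + 1 - k).choose 2 * σ ^ (n - k) := by rw [card_univ, card_sigma_fin_eq_choose_two]

theorem exists_duplicateFree_of_choose_two_lt_pow (hσ : 0 < σ)
    (h : (n + 1 - k).choose 2 < σ ^ k) :
    ∃ s : Fin n → Fin σ, DuplicateFree k s := by
  classical
  rcases lt_or_ge n k with hnk | hkn
  · exact ⟨fun _ => ⟨0, hσ⟩, fun i j _ hi _ => by omega⟩
  have card_bad_lt : #{s : Fin n → Fin σ | ¬ DuplicateFree k s} <
      #(univ : Finset (Fin n → Fin σ)) :=
    calc #{s : Fin n → Fin σ | ¬ DuplicateFree k s}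
        ≤ (n + 1 - k).choose 2 * σ ^ (n - k) := card_filter_not_duplicateFree_le
      _ < σ ^ k * σ ^ (n - k) := Nat.mul_lt_mul_of_pos_right h (pow_pos hσ _)
      _ = #(univ : Finset (Fin n → Fin σ)) := by
          rw [pow_mul_pow_sub σ hkn, card_univ, Fintype.card_fun, Fintype.card_fin,
            Fintype.card_fin]
  obtain ⟨s, -, hs⟩ := exists_mem_notMem_of_card_lt_card card_bad_lt
  exact ⟨s, by simpa using hs⟩

end Windows

theorem sampleLength_sq_le {k σ : ℕ} {ε : ℝ} (hε : 0 ≤ ε) (hσ : k < σ) :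
    sampleLength k ε σ ^ 2 ≤ (σ - k) ^ k := by
  have one_le_base : (1 : ℝ) ≤ (σ - k : ℕ) := by
    exact_mod_cast Nat.sub_pos_of_lt hσ
  have base_nonneg : (0 : ℝ) ≤ (σ - k : ℕ) := Nat.cast_nonneg _
  have sampleLength_le : (sampleLength k ε σ : ℝ) ≤ ((σ - k : ℕ) : ℝ) ^ ((k : ℝ) / 2) :=
    (Nat.floor_le (Real.rpow_nonneg base_nonneg _)).trans
      (Real.rpow_le_rpow_of_exponent_le one_le_base (sub_le_self _ hε))
  have sq_le : (sampleLength k ε σ : ℝ) ^ 2 ≤ ((σ - k : ℕ) : ℝ) ^ k :=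
    calc (sampleLength k ε σ : ℝ) ^ 2
        ≤ (((σ - k : ℕ) : ℝ) ^ ((k : ℝ) / 2)) ^ 2 := by gcongr
      _ = ((σ - k : ℕ) : ℝ) ^ k := by
          rw [← Real.rpow_mul_natCast base_nonneg, Nat.cast_ofNat, div_mul_cancel₀ _ two_ne_zero,
            Real.rpow_natCast]
  exact_mod_cast sq_le

theorem choose_two_le_sq_div_two (n : ℕ) : n.choose 2 ≤ n ^ 2 / 2 := by
  rw [Nat.choose_two_right, sq]
  gcongr
  exact Nat.sub_le n 1

/-- Existence of long duplicate-free strings: for `k ≥ 1` and `0 < ε < k/2`, for all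
sufficiently large `σ` there is a string of length `⌊(σ-k)^(k/2-ε)⌋` over `Fin σ`
containing no duplicate `k`-tuples. -/
theorem exists_duplicate_free_string (k : ℕ) (hk : 1 ≤ k) (ε : ℝ) (hε0 : 0 < ε)
    (hε : ε < (k : ℝ) / 2) :
    ∃ σ₀ : ℕ, ∀ σ : ℕ, σ₀ ≤ σ →
      ∃ s : Fin (sampleLength k ε σ) → Fin σ,
        ∀ i j : ℕ, i < j →
          ∀ (hi : i + k ≤ sampleLength k ε σ) (hj : j + k ≤ sampleLength k ε σ),
            FinWindow k s i hi ≠ FinWindow k s j hj := by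
  refine ⟨k + 1, fun σ hσ => exists_duplicateFree_of_choose_two_lt_pow (by omega) ?_⟩
  set n := sampleLength k ε σ
  have base_pow_pos : 0 < (σ - k) ^ k := Nat.pow_pos (Nat.sub_pos_of_lt hσ)
  calc (n + 1 - k).choose 2
      ≤ n.choose 2 := Nat.choose_le_choose 2 (by omega)
    _ ≤ n ^ 2 / 2 := choose_two_le_sq_div_two n
    _ ≤ (σ - k) ^ k / 2 := Nat.div_le_div_right (sampleLength_sq_le hε0.le hσ)
    _ < (σ - k) ^ k := Nat.div_lt_self base_pow_pos one_lt_two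
    _ ≤ σ ^ k := Nat.pow_le_pow_left (Nat.sub_le σ k) k
end
end
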